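/- Let X, Y be natural numbers with Y ≥ 1 and n = size(Y). Then g^[n](E(X,Y), 2^{3n+1}·X) = (2·X·Y + 2·X + 1, 2·X). -/

import Mathlib

/-- The i-th binary digit of `Y` (least significant has index 0). -/
def bit (Y i : ℕ) : ℕ := Y / 2 ^ i % 2

/-- The Loop-I encoding `E(X,Y)`. -/
def E (X Y : ℕ) : ℕ :=
  4 ^ Nat.size Y * (2 * X + 1) +
    ∑ i ∈ Finset.range (Nat.size Y), 2 * 4 ^ (Nat.size Y - 1 - i) * bit Y i

/-- The Loop-IV step. -/
def g : ℕ × ℕ → ℕ × ℕ := fun p =>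
  let a' := p.1 / 2
  let a'' := if Odd a' then a' + p.2 / 4 else a'
  (a'' / 2, p.2 / 8)

/-!
In base 4, the low digits of the first counter are the doubled binary digits of `Y`, the most
significant one lowest; above them sits the accumulator. When `m + 1` digits are left, the second
counter is `8 ^ (m + 1) * B`. A step of Loop IV removes the lowest base-4 digit, `2 * bit Y m`, and
adds `bit Y m * (8 ^ m * B)` to what remains. Since `8 ^ m = 4 ^ m * 2 ^ m`, this addition passes
over the `m` digits still queued and increases the accumulator by `bit Y m * 2 ^ m * B`, so that
the whole loop adds `Y * B`.
-/

/-- The first counter of Loop IV when the accumulator is `C` and the `m` lowest binary digits of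
`Y` are still to be consumed. The digits are doubled and stored in base 4 below `C`, in reverse
order, so that the next one to be consumed, of index `m - 1`, is the lowest. -/
def queueCounter (Y m C : ℕ) : ℕ :=
  4 ^ m * C + 2 * ∑ i ∈ Finset.range m, 4 ^ (m - 1 - i) * bit Y i

theorem E_eq_queueCounter (X Y : ℕ) : E X Y = queueCounter Y (Nat.size Y) (2 * X + 1) := by
  simp only [E, queueCounter, Finset.mul_sum, mul_assoc]

theorem queueCounter_zero (Y C : ℕ) : queueCounter Y 0 C = C := by
  simp [queueCounter]

theorem sum_range_succ_pow_sub_mul {R : Type*} [Semiring R] (b : R) (f : ℕ → R) (m : ℕ) :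
    ∑ i ∈ Finset.range (m + 1), b ^ (m - i) * f i =
      b * ∑ i ∈ Finset.range m, b ^ (m - 1 - i) * f i + f m := by
  rw [Finset.sum_range_succ, Nat.sub_self, pow_zero, one_mul, Finset.mul_sum]
  congr 1
  refine Finset.sum_congr rfl fun i hi => ?_
  have hexp : m - i = m - 1 - i + 1 := by
    have := Finset.mem_range.mp hi
    omega
  rw [hexp, pow_succ', mul_assoc]

theorem queueCounter_succ (Y m C : ℕ) :
    queueCounter Y (m + 1) C = 4 * queueCounter Y m C + 2 * bit Y m := by
  simp only [queueCounter, Nat.add_sub_cancel, sum_range_succ_pow_sub_mul]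
  ring

theorem queueCounter_add (Y m C D : ℕ) :
    queueCounter Y m (C + D) = queueCounter Y m C + 4 ^ m * D := by
  simp only [queueCounter]
  ring

theorem bit_lt_two (Y i : ℕ) : bit Y i < 2 :=
  Nat.mod_lt _ two_pos

theorem g_four_mul_add (A B : ℕ) {d : ℕ} (hd : d < 2) :
    g (4 * A + 2 * d, 8 * B) = (A + d * B, B) := by
  have hhalf : (4 * A + 2 * d) / 2 = 2 * A + d := by omega
  have hodd : Odd (2 * A + d) ↔ d = 1 := by rw [Nat.odd_iff]; omega
  simp only [g, hhalf, hodd, Prod.mk.injEq]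
  interval_cases d
  · simp
  · simp only [if_true, one_mul]
    omega

theorem g_queueCounter_succ (Y m C B : ℕ) :
    g (queueCounter Y (m + 1) C, 8 ^ (m + 1) * B) =
      (queueCounter Y m (C + 2 ^ m * bit Y m * B), 8 ^ m * B) := by
  have hpow : (8 : ℕ) ^ m = 4 ^ m * 2 ^ m := by
    rw [← mul_pow]
    norm_num
  calc g (queueCounter Y (m + 1) C, 8 ^ (m + 1) * B)
      = g (4 * queueCounter Y m C + 2 * bit Y m, 8 * (8 ^ m * B)) := by
        rw [queueCounter_succ, pow_succ', mul_assoc]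
    _ = (queueCounter Y m C + bit Y m * (8 ^ m * B), 8 ^ m * B) :=
        g_four_mul_add _ _ (bit_lt_two Y m)
    _ = (queueCounter Y m (C + 2 ^ m * bit Y m * B), 8 ^ m * B) := by
        rw [queueCounter_add, hpow]
        ring_nf

theorem g_iterate_queueCounter (Y m C B : ℕ) :
    g^[m] (queueCounter Y m C, 8 ^ m * B) = (C + Y % 2 ^ m * B, B) := by
  induction m generalizing C with
  | zero => simp [queueCounter_zero, Nat.mod_one]
  | succ m ih =>
    have hmod : Y % 2 ^ (m + 1) = Y % 2 ^ m + 2 ^ m * bit Y m := Nat.mod_pow_succ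
    rw [Function.iterate_succ_apply, g_queueCounter_succ, ih, hmod]
    ring_nf

theorem loopIV_exit (X Y : ℕ) (hY : 1 ≤ Y) :
    g^[Nat.size Y] (E X Y, 2 ^ (3 * Nat.size Y + 1) * X) =
      (2 * X * Y + 2 * X + 1, 2 * X) := by
  have hcounter : 2 ^ (3 * Nat.size Y + 1) * X = 8 ^ Nat.size Y * (2 * X) := by
    rw [pow_succ, pow_mul, mul_assoc]
    norm_num
  rw [E_eq_queueCounter, hcounter, g_iterate_queueCounter,
    Nat.mod_eq_of_lt (Nat.lt_size_self Y)]
  ring_nf
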